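/- Let q be a power of an odd prime with q > 3. Then: (a) the set of integers n with 1 ≤ n ≤ q − 1 such that (q − 1) divides n² − 1 and gcd(n − 1, q − 1) = 2 equals {(q − 3)/2, q − 2} if q ≡ 1 (mod 8), and equals {q − 2} if q ≡ 3, 5, or 7 (mod 8); (b) the set of integers n with 1 ≤ n ≤ q + 1 such that (q + 1) divides n² − 1 and gcd(n − 1, q + 1) = 4 equals {(q − 1)/2} if q ≡ 3 (mod 8), equals {(3q − 1)/4} if q ≡ 7 (mod 32), equals {(q − 3)/4} if q ≡ 23 (mod 32), and is empty in all remaining cases. -/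

import Mathlib

/-!
Put `N = d * m` and `n = d * k + 1`. Then `gcd (n - 1) N = d` says that `k` is coprime to `m`, and
`n ^ 2 - 1 = d * (k * (d * k + 2))`, so `N ∣ n ^ 2 - 1` becomes `m ∣ d * k + 2 = n + 1`. If
`1 ≤ n ≤ N` then `n + 1 = t * m` with `1 ≤ t ≤ d`. Moreover `m ∣ d * k + 2` forces `gcd k m ∣ 2`, so
coprimality is only a parity condition, and for `d = 2` and `d = 4` each `t` gives a congruence
on `m`.
-/

/-- The exponents `n`, represented in `{1, …, N}`, with `n ^ 2 ≡ 1` modulo `N` and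
`gcd (n - 1) N = d`. For `N = q - χ(a)` they index the Rédei functions `R_{n,a}` over `P¹(F_q)` that
are involutions with exactly `d + χ(a) + 1` fixed points. -/
def involutionExponents (N d : ℕ) : Finset ℕ :=
  (Finset.Icc 1 N).filter (fun n => N ∣ n ^ 2 - 1 ∧ Nat.gcd (n - 1) N = d)

section

variable {N d m k n q : ℕ}

lemma mem_involutionExponents :
    n ∈ involutionExponents N d ↔ (1 ≤ n ∧ n ≤ N) ∧ N ∣ n ^ 2 - 1 ∧ Nat.gcd (n - 1) N = d := by
  rw [involutionExponents, Finset.mem_filter, Finset.mem_Icc]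

lemma dvd_sub_one_of_mem_involutionExponents (h : n ∈ involutionExponents N d) : d ∣ n - 1 :=
  (mem_involutionExponents.1 h).2.2 ▸ Nat.gcd_dvd_left (n - 1) N

lemma dvd_of_mem_involutionExponents (h : n ∈ involutionExponents N d) : d ∣ N :=
  (mem_involutionExponents.1 h).2.2 ▸ Nat.gcd_dvd_right (n - 1) N

lemma coprime_iff_not_even_and_even_of_dvd_mul_add_two (h : m ∣ d * k + 2) :
    k.Coprime m ↔ ¬(Even k ∧ Even m) := by
  have gcd_dvd_two : k.gcd m ∣ 2 :=
    (Nat.dvd_add_right ((Nat.gcd_dvd_left k m).mul_left d)).1 ((Nat.gcd_dvd_right k m).trans h)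
  rw [even_iff_two_dvd, even_iff_two_dvd, ← Nat.dvd_gcd_iff]
  rcases (Nat.dvd_prime Nat.prime_two).1 gcd_dvd_two with hg | hg <;>
    simp [Nat.Coprime, hg]

lemma mul_add_one_mem_involutionExponents_iff (hd : 0 < d) :
    d * k + 1 ∈ involutionExponents (d * m) d ↔
      k < m ∧ m ∣ d * k + 2 ∧ ¬(Even k ∧ Even m) := by
  have range_iff : (1 ≤ d * k + 1 ∧ d * k + 1 ≤ d * m) ↔ k < m := by
    rw [and_iff_right (Nat.le_add_left 1 _), Nat.succ_le_iff, Nat.mul_lt_mul_left hd]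
  have gcd_iff : Nat.gcd (d * k) (d * m) = d ↔ k.Coprime m := by
    rw [Nat.gcd_mul_left, Nat.mul_eq_left hd.ne', Nat.Coprime]
  have sq_sub_one : (d * k + 1) ^ 2 - 1 = d * (k * (d * k + 2)) :=
    Nat.sub_eq_of_eq_add (by ring)
  rw [mem_involutionExponents, range_iff, sq_sub_one, Nat.mul_dvd_mul_iff_left hd,
    Nat.add_sub_cancel, gcd_iff]
  refine and_congr_right fun _ => ⟨fun ⟨hdvd, hcop⟩ => ?_, fun ⟨hdvd, hpar⟩ => ?_⟩
  · have hdvd' : m ∣ d * k + 2 := hcop.symm.dvd_of_dvd_mul_left hdvd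
    exact ⟨hdvd', (coprime_iff_not_even_and_even_of_dvd_mul_add_two hdvd').1 hcop⟩
  · exact ⟨hdvd.mul_left k, (coprime_iff_not_even_and_even_of_dvd_mul_add_two hdvd).2 hpar⟩

lemma mem_involutionExponents_mul_iff_exists (hd : 2 ≤ d) :
    n ∈ involutionExponents (d * m) d ↔
      ∃ t ∈ Finset.Icc 1 d, ∃ k, n = d * k + 1 ∧ d * k + 2 = t * m ∧ ¬(Even k ∧ Even m) := by
  have hd0 : 0 < d := by omega
  constructor
  · intro hn
    obtain ⟨k, hk⟩ := dvd_sub_one_of_mem_involutionExponents hn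
    obtain rfl : n = d * k + 1 := by
      have := (mem_involutionExponents.1 hn).1
      omega
    obtain ⟨hkm, ⟨t, ht⟩, hpar⟩ := (mul_add_one_mem_involutionExponents_iff hd0).1 hn
    have t_pos : 1 ≤ t := Nat.pos_of_ne_zero (by rintro rfl; omega)
    have t_le : t ≤ d := by
      refine Nat.le_of_mul_le_mul_left (c := m) ?_ (by omega)
      calc m * t = d * k + 2 := ht.symm
        _ ≤ d * (k + 1) := by rw [mul_add_one]; omega
        _ ≤ d * m := Nat.mul_le_mul_left d hkm
        _ = m * d := mul_comm d m
    exact ⟨t, Finset.mem_Icc.2 ⟨t_pos, t_le⟩, k, rfl, by rw [ht, mul_comm], hpar⟩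
  · rintro ⟨t, ht, k, rfl, hkt, hpar⟩
    have hkm : d * k < d * m :=
      calc d * k < t * m := by omega
        _ ≤ d * m := Nat.mul_le_mul_right m (Finset.mem_Icc.1 ht).2
    exact (mul_add_one_mem_involutionExponents_iff hd0).2
      ⟨Nat.lt_of_mul_lt_mul_left hkm, ⟨t, by rw [hkt, mul_comm]⟩, hpar⟩

lemma mem_involutionExponents_two_mul_two :
    n ∈ involutionExponents (2 * m) 2 ↔ n + 1 = 2 * m ∨ (n + 1 = m ∧ m % 4 = 0) := by
  simp only [mem_involutionExponents_mul_iff_exists le_rfl, Finset.mem_Icc, Nat.even_iff]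
  constructor
  · rintro ⟨t, ⟨ht1, ht2⟩, k, hn, hk, hpar⟩
    interval_cases t <;> omega
  · rintro (h | ⟨h, h4⟩)
    · exact ⟨2, by omega, m - 1, by omega⟩
    · exact ⟨1, by omega, m / 2 - 1, by omega⟩

lemma mem_involutionExponents_four_mul_four :
    n ∈ involutionExponents (4 * m) 4 ↔
      (n + 1 = 2 * m ∧ m % 2 = 1) ∨ (n + 1 = m ∧ m % 8 = 6) ∨ (n + 1 = 3 * m ∧ m % 8 = 2) := by
  simp only [mem_involutionExponents_mul_iff_exists (show 2 ≤ 4 by norm_num), Finset.mem_Icc,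
    Nat.even_iff]
  constructor
  · rintro ⟨t, ⟨ht1, ht4⟩, k, hn, hk, hpar⟩
    interval_cases t <;> omega
  · rintro (⟨h, hm⟩ | ⟨h, hm⟩ | ⟨h, hm⟩)
    · exact ⟨2, by omega, m / 2, by omega⟩
    · exact ⟨1, by omega, m / 4, by omega⟩
    · exact ⟨3, by omega, 3 * m / 4, by omega⟩

lemma mem_involutionExponents_sub_one_two (hq : Odd q) :
    n ∈ involutionExponents (q - 1) 2 ↔ n + 2 = q ∨ (2 * n + 3 = q ∧ q % 8 = 1) := by
  obtain ⟨m, rfl⟩ := hq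
  rw [Nat.add_sub_cancel, mem_involutionExponents_two_mul_two]
  omega

lemma mem_involutionExponents_add_one_four :
    n ∈ involutionExponents (q + 1) 4 ↔
      (2 * n + 1 = q ∧ q % 8 = 3) ∨ (4 * n + 1 = 3 * q ∧ q % 32 = 7) ∨
        (4 * n + 3 = q ∧ q % 32 = 23) := by
  by_cases h4 : 4 ∣ q + 1
  · obtain ⟨m, hm⟩ := h4
    rw [hm, mem_involutionExponents_four_mul_four]
    omega
  · have not_mem : n ∉ involutionExponents (q + 1) 4 :=
      fun h => h4 (dvd_of_mem_involutionExponents h)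
    refine iff_of_false not_mem ?_
    omega

end

theorem stmt_12_general (q : ℕ) (hq : 1 < q) :
    ((q % 8 = 1 → involutionExponents (q - 1) 2 = {(q - 3) / 2, q - 2}) ∧
      (q % 8 = 3 ∨ q % 8 = 5 ∨ q % 8 = 7 → involutionExponents (q - 1) 2 = {q - 2})) ∧
    (q % 8 = 3 → involutionExponents (q + 1) 4 = {(q - 1) / 2}) ∧
    (q % 32 = 7 → involutionExponents (q + 1) 4 = {(3 * q - 1) / 4}) ∧
    (q % 32 = 23 → involutionExponents (q + 1) 4 = {(q - 3) / 4}) ∧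
    (q % 8 ≠ 3 → q % 32 ≠ 7 → q % 32 ≠ 23 → involutionExponents (q + 1) 4 = ∅) := by
  have odd_of_mod_eight (h : q % 8 = 1 ∨ q % 8 = 3 ∨ q % 8 = 5 ∨ q % 8 = 7) : Odd q :=
    Nat.odd_iff.2 (by omega)
  refine ⟨⟨fun h => ?_, fun h => ?_⟩, fun h => ?_, fun h => ?_, fun h => ?_,
    fun h₃ h₇ h₂₃ => ?_⟩ <;> ext n
  · rw [mem_involutionExponents_sub_one_two (odd_of_mod_eight (.inl h)), Finset.mem_insert,
      Finset.mem_singleton]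
    omega
  · rw [mem_involutionExponents_sub_one_two (odd_of_mod_eight (.inr h)), Finset.mem_singleton]
    omega
  · rw [mem_involutionExponents_add_one_four, Finset.mem_singleton]
    omega
  · rw [mem_involutionExponents_add_one_four, Finset.mem_singleton]
    omega
  · rw [mem_involutionExponents_add_one_four, Finset.mem_singleton]
    omega
  · refine iff_of_false ?_ (Finset.notMem_empty n)
    rw [mem_involutionExponents_add_one_four]
    omega

/-- Proposition 3.10: the Rédei involutions with four fixed points. -/
theorem stmt_12 (q : ℕ) (hq : ∃ p' j : ℕ, p'.Prime ∧ Odd p' ∧ 0 < j ∧ q = p' ^ j)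
    (hq3 : 3 < q) :
    ((q % 8 = 1 →
      (Finset.Icc 1 (q - 1)).filter
        (fun n => (q - 1) ∣ n ^ 2 - 1 ∧ Nat.gcd (n - 1) (q - 1) = 2) =
        {(q - 3) / 2, q - 2}) ∧
     ((q % 8 = 3 ∨ q % 8 = 5 ∨ q % 8 = 7) →
      (Finset.Icc 1 (q - 1)).filter
        (fun n => (q - 1) ∣ n ^ 2 - 1 ∧ Nat.gcd (n - 1) (q - 1) = 2) =
        {q - 2})) ∧
    ((q % 8 = 3 →
      (Finset.Icc 1 (q + 1)).filter
        (fun n => (q + 1) ∣ n ^ 2 - 1 ∧ Nat.gcd (n - 1) (q + 1) = 4) =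
        {(q - 1) / 2}) ∧
     (q % 32 = 7 →
      (Finset.Icc 1 (q + 1)).filter
        (fun n => (q + 1) ∣ n ^ 2 - 1 ∧ Nat.gcd (n - 1) (q + 1) = 4) =
        {(3 * q - 1) / 4}) ∧
     (q % 32 = 23 →
      (Finset.Icc 1 (q + 1)).filter
        (fun n => (q + 1) ∣ n ^ 2 - 1 ∧ Nat.gcd (n - 1) (q + 1) = 4) =
        {(q - 3) / 4}) ∧
     (q % 8 ≠ 3 → q % 32 ≠ 7 → q % 32 ≠ 23 →
      (Finset.Icc 1 (q + 1)).filter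
        (fun n => (q + 1) ∣ n ^ 2 - 1 ∧ Nat.gcd (n - 1) (q + 1) = 4) = ∅)) :=
  stmt_12_general q (by omega)
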